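/- Let t_1,...,t_N be independent Bernoulli random variables with P(t_l = 1) = p_l ∈ [0,1], and for i ≤ N write P_i(k, j) for the probability that, among the first i coordinates, the lazarus count equals k and the last one-position equals j. Suppose i ≥ 3 and p_{i-1} > 0. Then: P_i(1, i) = p_i · P_{i-1}(1, i-1) + p_i · ((1 - p_{i-1}) / p_{i-1}) · P_{i-1}(0, i-1) − p_i · P_{i-1}(0, 0), and this equals p_i · P_{i-1}(1, i-1) + p_i · P_{i-1}(0, i-2). -/

import Mathlib

/-!
When one coordinate is appended, the pair (lazarus count, last one-position) changes
deterministically: a zero changes nothing, while a one moves the last one-position to the end and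
turns every zero after the previous one, if there is one, into a lazarus zero. As the appended
coordinate is independent of the earlier ones, `P_{i-1}(k, j) = (1 - p_{i-1}) P_{i-2}(k, j)` for
`j < i - 1`, and `P_i(k, i)` is `p_i` times `P_{i-1}(k, 0)` plus the sum of the
`P_{i-1}(k - m, i - 1 - m)` over the possible gap lengths `m`.

For `k ≥ 1` the gap `m = 0` contributes `P_{i-1}(k, i - 1)`. The remaining gaps lose one zero when
`t_{i-1} = 0` is flipped to a one, so together with `P_{i-1}(k - 1, 0)` they add up to the
odds ratio `(1 - p_{i-1}) / p_{i-1}` times `P_{i-1}(k - 1, i - 1)`.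
-/

/-- Probability of the transaction `t` under independent Bernoulli coordinates, where item
`l ∈ {1,...,N}` (coordinate `l-1`) takes value `1` with probability `p l`. -/
noncomputable def bernProb (N : ℕ) (p : ℕ → ℝ) (t : Fin N → Bool) : ℝ :=
  ∏ l : Fin N, if t l = true then p ((l : ℕ) + 1) else 1 - p ((l : ℕ) + 1)

/-- The lazarus count of the restriction of `t` to its first `i` coordinates
(items `1,...,i`): the number of zeros lying strictly between two ones, all within the
first `i` coordinates. -/
def lazTo (N : ℕ) (t : Fin N → Bool) (i : ℕ) : ℕ :=
  (Finset.univ.filter fun l : Fin N =>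
    (l : ℕ) + 1 ≤ i ∧ t l = false ∧
      ∃ a b : Fin N, (b : ℕ) + 1 ≤ i ∧ a < l ∧ l < b ∧ t a = true ∧ t b = true).card

/-- The last one-position (in `{1,...,i}`, or `0` if none) of the restriction of `t` to its
first `i` coordinates. -/
def lastTo (N : ℕ) (t : Fin N → Bool) (i : ℕ) : ℕ :=
  (Finset.univ.filter fun l : Fin N => (l : ℕ) + 1 ≤ i ∧ t l = true).sup fun l => (l : ℕ) + 1

/-- `P_i(k, j)`: the probability that, among the first `i` coordinates, the lazarus count
equals `k` and the last one-position equals `j`. -/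
noncomputable def lazLastProb (N : ℕ) (p : ℕ → ℝ) (i k j : ℕ) : ℝ :=
  ∑ t ∈ Finset.univ.filter
      (fun t : Fin N → Bool => lazTo N t i = k ∧ lastTo N t i = j),
    bernProb N p t

section Prefix

variable {N : ℕ} {s t : Fin N → Bool} {m : ℕ}

lemma lt_lastTo_iff {n : ℕ} :
    n < lastTo N t m ↔ ∃ b : Fin N, n ≤ b ∧ (b : ℕ) < m ∧ t b = true := by
  simp only [lastTo, Finset.lt_sup_iff, Finset.mem_filter, Finset.mem_univ, true_and]
  exact exists_congr fun b => by rw [Nat.succ_le_iff, Nat.lt_succ_iff, and_comm]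

lemma lastTo_le (t : Fin N → Bool) (m : ℕ) : lastTo N t m ≤ m :=
  Finset.sup_le fun _ hl => (Finset.mem_filter.mp hl).2.1

lemma eq_false_of_lastTo_le {l : Fin N} (h : lastTo N t m ≤ l) (hl : (l : ℕ) < m) :
    t l = false := by
  by_contra htl
  exact h.not_gt (lt_lastTo_iff.mpr ⟨l, le_rfl, hl, Bool.eq_true_of_not_eq_false htl⟩)

lemma exists_lastTo_eq_succ (h : lastTo N t m ≠ 0) :
    ∃ j : Fin N, lastTo N t m = j + 1 ∧ t j = true := by
  obtain ⟨b, hb, hbm, htb⟩ := lt_lastTo_iff.mp (Nat.sub_one_lt h)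
  have hlt : (b : ℕ) < lastTo N t m := lt_lastTo_iff.mpr ⟨b, le_rfl, hbm, htb⟩
  exact ⟨b, by omega, htb⟩

lemma lastTo_congr (h : ∀ l : Fin N, (l : ℕ) < m → s l = t l) : lastTo N s m = lastTo N t m := by
  unfold lastTo
  rw [Finset.filter_congr fun l _ => and_congr_right fun hl => by rw [h l hl]]

lemma lastTo_succ_of_true {c : Fin N} (hc : t c = true) : lastTo N t (c + 1) = c + 1 :=
  le_antisymm (lastTo_le t _) (lt_lastTo_iff.mpr ⟨c, le_rfl, Nat.lt_succ_self _, hc⟩)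

lemma lastTo_succ_of_false {c : Fin N} (hc : t c = false) :
    lastTo N t (c + 1) = lastTo N t c := by
  refine eq_of_forall_lt_iff fun n => ?_
  rw [lt_lastTo_iff, lt_lastTo_iff]
  refine exists_congr fun b => and_congr_right fun _ => and_congr_left fun hb => ?_
  have hbc : (b : ℕ) ≠ c := fun h => by simp [Fin.ext h, hc] at hb
  omega

lemma lazTo_eq_card (t : Fin N → Bool) (m : ℕ) :
    lazTo N t m = (Finset.univ.filter fun l : Fin N =>
      (l : ℕ) + 1 < lastTo N t m ∧ t l = false ∧ ∃ a < l, t a = true).card := by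
  unfold lazTo
  congr 1
  refine Finset.filter_congr fun l _ => ?_
  rw [lt_lastTo_iff]
  constructor
  · rintro ⟨-, hl, a, b, hbm, hal, hlb, ha, hb⟩
    exact ⟨⟨b, hlb, hbm, hb⟩, hl, a, hal, ha⟩
  · rintro ⟨⟨b, hlb, hbm, hb⟩, hl, a, hal, ha⟩
    exact ⟨by omega, hl, a, b, hbm, hal, hlb, ha, hb⟩

lemma lazTo_eq_zero_of_lastTo_eq_zero (h : lastTo N t m = 0) : lazTo N t m = 0 := by
  simp [lazTo_eq_card, h]

lemma lazTo_congr (h : ∀ l : Fin N, (l : ℕ) < m → s l = t l) : lazTo N s m = lazTo N t m := by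
  rw [lazTo_eq_card, lazTo_eq_card, lastTo_congr h]
  congr 1
  refine Finset.filter_congr fun l _ => and_congr_right fun hl => ?_
  have hlm : (l : ℕ) < m := (Nat.lt_of_succ_lt hl).trans_le (lastTo_le t m)
  rw [h l hlm]
  exact and_congr_right fun _ => exists_congr fun a => and_congr_right fun hal => by
    rw [h a (lt_trans hal hlm)]

lemma lazTo_succ_of_false {c : Fin N} (hc : t c = false) : lazTo N t (c + 1) = lazTo N t c := by
  rw [lazTo_eq_card, lazTo_eq_card, lastTo_succ_of_false hc]

lemma lazTo_succ_of_lastTo_eq_zero (h : lastTo N t m = 0) : lazTo N t (m + 1) = 0 := by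
  rw [lazTo_eq_card, Finset.card_eq_zero, Finset.filter_eq_empty_iff]
  rintro l - ⟨hl, -, a, hal, ha⟩
  have hlast : (a : ℕ) < lastTo N t m :=
    lt_lastTo_iff.mpr ⟨a, le_rfl, by have := lastTo_le t (m + 1); omega, ha⟩
  omega

lemma lazTo_succ_of_lastTo_ne_zero {c : Fin N} (hc : t c = true) (h : lastTo N t c ≠ 0) :
    lazTo N t (c + 1) = lazTo N t c + (c - lastTo N t c) := by
  obtain ⟨j, hj, htj⟩ := exists_lastTo_eq_succ h
  have hjc : j < c := by have := lastTo_le t c; omega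
  have card_gap : (c : ℕ) - (j + 1) = (Finset.Ioo j c).card := by rw [Fin.card_Ioo]; omega
  rw [lazTo_eq_card, lazTo_eq_card, lastTo_succ_of_true hc, hj, card_gap,
    ← Finset.card_union_of_disjoint]
  · congr 1
    ext l
    simp only [Finset.mem_union, Finset.mem_filter, Finset.mem_univ, true_and, Finset.mem_Ioo,
      Nat.add_lt_add_iff_right, Fin.val_fin_lt]
    constructor
    · rintro ⟨hlc, hl, hones⟩
      rcases lt_trichotomy l j with hlj | rfl | hjl
      · exact Or.inl ⟨hlj, hl, hones⟩
      · simp [htj] at hl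
      · exact Or.inr ⟨hjl, hlc⟩
    · rintro (⟨hlj, hl, hones⟩ | ⟨hjl, hlc⟩)
      · exact ⟨hlj.trans hjc, hl, hones⟩
      · exact ⟨hlc, eq_false_of_lastTo_le (hj.trans_le hjl) hlc, j, hjl, htj⟩
  · refine Finset.disjoint_left.mpr fun l hl hgap => ?_
    have hlj := (Finset.mem_filter.mp hl).2.1
    have hjl := (Finset.mem_Ioo.mp hgap).1
    omega

/-- The bound `min c (k + 1)` keeps both `k - m` and `c - m` from truncating. -/
lemma lazTo_succ_eq_iff_of_true {c : Fin N} (hc : t c = true) {k : ℕ} :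
    lazTo N t (c + 1) = k ↔
      (lazTo N t c = k ∧ lastTo N t c = 0) ∨
        ∃ m ∈ Finset.range (min (c : ℕ) (k + 1)),
          lazTo N t c = k - m ∧ lastTo N t c = c - m := by
  simp only [Finset.mem_range]
  have hlast := lastTo_le t c
  by_cases h : lastTo N t c = 0
  · rw [lazTo_succ_of_lastTo_eq_zero h, lazTo_eq_zero_of_lastTo_eq_zero h]
    refine ⟨fun hk => Or.inl ⟨hk, h⟩, ?_⟩
    rintro (⟨hk, -⟩ | ⟨m, hm, -, hlm⟩)
    · exact hk
    · omega
  · rw [lazTo_succ_of_lastTo_ne_zero hc h]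
    constructor
    · exact fun hk => Or.inr ⟨c - lastTo N t c, by omega, by omega, by omega⟩
    · rintro (⟨-, h0⟩ | ⟨m, hm, hk, hlm⟩)
      · exact absurd h0 h
      · omega

end Prefix

/-- The probability that item `l` takes the value `b`, so that `bernProb` is the product of these
over the coordinates. -/
noncomputable def itemProb (p : ℕ → ℝ) (l : ℕ) (b : Bool) : ℝ :=
  if b = true then p l else 1 - p l

section Recurrence

variable {N : ℕ} (p : ℕ → ℝ)

lemma itemProb_true_add_itemProb_false (l : ℕ) : itemProb p l true + itemProb p l false = 1 := by
  simp [itemProb]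

lemma bernProb_eq_itemProb_mul_prod_erase (t : Fin N → Bool) (c : Fin N) :
    bernProb N p t =
      itemProb p (c + 1) (t c) * ∏ l ∈ Finset.univ.erase c, itemProb p (l + 1) (t l) :=
  (Finset.mul_prod_erase _ _ (Finset.mem_univ c)).symm

lemma itemProb_mul_bernProb_update (t : Fin N → Bool) (c : Fin N) (b : Bool) :
    itemProb p (c + 1) (t c) * bernProb N p (Function.update t c b) =
      itemProb p (c + 1) b * bernProb N p t := by
  have prod_update : ∏ l ∈ Finset.univ.erase c, itemProb p (l + 1) (Function.update t c b l) =
      ∏ l ∈ Finset.univ.erase c, itemProb p (l + 1) (t l) :=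
    Finset.prod_congr rfl fun l hl => by rw [Function.update_of_ne (Finset.ne_of_mem_erase hl)]
  rw [bernProb_eq_itemProb_mul_prod_erase p _ c, bernProb_eq_itemProb_mul_prod_erase p t c,
    Function.update_self, prod_update]
  ring

lemma itemProb_mul_sum_bernProb_coord_and (c : Fin N) (b b' : Bool) {Q : (Fin N → Bool) → Prop}
    [DecidablePred Q] (hQ : ∀ t b, Q (Function.update t c b) ↔ Q t) :
    itemProb p (c + 1) b' * ∑ t with t c = b ∧ Q t, bernProb N p t =
      itemProb p (c + 1) b * ∑ t with t c = b' ∧ Q t, bernProb N p t := by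
  rw [Finset.mul_sum, Finset.mul_sum]
  refine Finset.sum_bij' (fun t _ => Function.update t c b') (fun t _ => Function.update t c b)
    ?_ ?_ ?_ ?_ ?_ <;>
    simp only [Finset.mem_filter, Finset.mem_univ, true_and] <;> rintro t ⟨rfl, ht⟩
  · exact ⟨Function.update_self .., (hQ t b').mpr ht⟩
  · exact ⟨Function.update_self .., (hQ t b).mpr ht⟩
  · rw [Function.update_idem, Function.update_eq_self]
  · rw [Function.update_idem, Function.update_eq_self]
  · exact (itemProb_mul_bernProb_update p t c b').symm

lemma sum_bernProb_coord_and (c : Fin N) (b : Bool) {Q : (Fin N → Bool) → Prop} [DecidablePred Q]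
    (hQ : ∀ t b, Q (Function.update t c b) ↔ Q t) :
    ∑ t with t c = b ∧ Q t, bernProb N p t =
      itemProb p (c + 1) b * ∑ t with Q t, bernProb N p t := by
  have split_coord : ∑ t with Q t, bernProb N p t =
      ∑ t with t c = true ∧ Q t, bernProb N p t +
        ∑ t with t c = false ∧ Q t, bernProb N p t := by
    rw [← Finset.sum_filter_add_sum_filter_not (Finset.univ.filter Q) (fun t => t c = true)]
    simp only [Finset.filter_filter, Bool.not_eq_true, and_comm]
  rw [split_coord, mul_add, ← itemProb_mul_sum_bernProb_coord_and p c b true hQ,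
    ← itemProb_mul_sum_bernProb_coord_and p c b false hQ, ← add_mul,
    itemProb_true_add_itemProb_false, one_mul]

lemma sum_bernProb_coord_and_prefix (c : Fin N) (b : Bool) (k j : ℕ) :
    ∑ t with t c = b ∧ lazTo N t c = k ∧ lastTo N t c = j, bernProb N p t =
      itemProb p (c + 1) b * lazLastProb N p c k j := by
  refine sum_bernProb_coord_and p c b fun t b => ?_
  have update_eq (l : Fin N) (hl : (l : ℕ) < c) : Function.update t c b l = t l :=
    Function.update_of_ne (Fin.ne_of_lt hl) b t
  rw [lazTo_congr update_eq, lastTo_congr update_eq]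

lemma lazLastProb_succ_zero (m k : ℕ) : lazLastProb N p m (k + 1) 0 = 0 := by
  refine Finset.sum_eq_zero fun t ht => ?_
  obtain ⟨hlaz, hlast⟩ := (Finset.mem_filter.mp ht).2
  simp [lazTo_eq_zero_of_lastTo_eq_zero hlast] at hlaz

lemma lazLastProb_succ_of_le {c j : ℕ} (hc : c < N) (hj : j ≤ c) (k : ℕ) :
    lazLastProb N p (c + 1) k j = (1 - p (c + 1)) * lazLastProb N p c k j := by
  lift c to Fin N using hc
  refine Eq.trans ?_ (sum_bernProb_coord_and_prefix p c false k j)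
  refine Finset.sum_congr (Finset.filter_congr fun t _ => ?_) fun _ _ => rfl
  cases htc : t c
  · simp [lazTo_succ_of_false htc, lastTo_succ_of_false htc]
  · have hne : (c : ℕ) + 1 ≠ j := by omega
    simp [lastTo_succ_of_true htc, hne]

lemma lazLastProb_succ_self {c : ℕ} (hc : c < N) (k : ℕ) :
    lazLastProb N p (c + 1) k (c + 1) =
      p (c + 1) * (lazLastProb N p c k 0 +
        ∑ m ∈ Finset.range (min c (k + 1)), lazLastProb N p c (k - m) (c - m)) := by
  lift c to Fin N using hc
  have appended_one (k j : ℕ) : p (c + 1) * lazLastProb N p c k j =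
      ∑ t with t c = true ∧ lazTo N t c = k ∧ lastTo N t c = j, bernProb N p t :=
    (sum_bernProb_coord_and_prefix p c true k j).symm
  simp only [mul_add, Finset.mul_sum, appended_one]
  rw [← Finset.sum_biUnion, ← Finset.sum_union]
  · refine Finset.sum_congr ?_ fun _ _ => rfl
    ext t
    simp only [Finset.mem_filter, Finset.mem_union, Finset.mem_biUnion, Finset.mem_univ, true_and]
    cases htc : t c
    · have hne : lastTo N t c ≠ c + 1 := by have := lastTo_le t c; omega
      simp [lastTo_succ_of_false htc, hne]
    · simp [lastTo_succ_of_true htc, lazTo_succ_eq_iff_of_true htc]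
  · simp only [Finset.disjoint_left, Finset.mem_biUnion, Finset.mem_filter, Finset.mem_range]
    rintro t ⟨-, -, -, h0⟩ ⟨m, hm, -, -, -, hlm⟩
    omega
  · intro m hm m' hm' hne
    simp only [Finset.coe_range, Set.mem_Iio] at hm hm'
    refine Finset.disjoint_filter.mpr fun t _ h h' => hne ?_
    omega

lemma one_sub_mul_lazLastProb_succ_self {c : ℕ} (hc : c < N) (k : ℕ) :
    (1 - p (c + 1)) * lazLastProb N p (c + 1) k (c + 1) =
      p (c + 1) * (lazLastProb N p (c + 1) k 0 +
        ∑ m ∈ Finset.range (min c (k + 1)), lazLastProb N p (c + 1) (k - m) (c - m)) := by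
  have appended_zero (m : ℕ) : lazLastProb N p (c + 1) (k - m) (c - m) =
      (1 - p (c + 1)) * lazLastProb N p c (k - m) (c - m) :=
    lazLastProb_succ_of_le p hc (Nat.sub_le c m) _
  simp only [lazLastProb_succ_self p hc, lazLastProb_succ_of_le p hc (Nat.zero_le c),
    appended_zero, ← Finset.mul_sum]
  ring

lemma lazLastProb_add_two_self {d : ℕ} (hd : d + 1 < N) (k : ℕ) :
    lazLastProb N p (d + 2) (k + 1) (d + 2) =
      p (d + 2) * lazLastProb N p (d + 1) (k + 1) (d + 1) +
        p (d + 2) * ∑ m ∈ Finset.range (min d (k + 1)),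
          lazLastProb N p (d + 1) (k - m) (d - m) := by
  rw [lazLastProb_succ_self p hd, lazLastProb_succ_zero, Nat.succ_min_succ,
    Finset.sum_range_succ']
  simp only [Nat.add_sub_add_right, Nat.sub_zero]
  ring

end Recurrence

theorem lazarus_recurrence_k_eq_one_general (N : ℕ) (p : ℕ → ℝ) (k d : ℕ) (hdN : d + 2 ≤ N)
    (hpd : p (d + 1) ≠ 0) :
    lazLastProb N p (d + 2) (k + 1) (d + 2)
        = p (d + 2) * lazLastProb N p (d + 1) (k + 1) (d + 1)
          + p (d + 2) * ((1 - p (d + 1)) / p (d + 1)) * lazLastProb N p (d + 1) k (d + 1)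
          - p (d + 2) * lazLastProb N p (d + 1) k 0 ∧
      lazLastProb N p (d + 2) (k + 1) (d + 2)
        = p (d + 2) * lazLastProb N p (d + 1) (k + 1) (d + 1)
          + p (d + 2) * ∑ m ∈ Finset.range (min d (k + 1)),
              lazLastProb N p (d + 1) (k - m) (d - m) := by
  have odds := one_sub_mul_lazLastProb_succ_self p (Nat.lt_of_succ_lt hdN) k
  refine ⟨?_, lazLastProb_add_two_self p hdN k⟩
  rw [lazLastProb_add_two_self p hdN, mul_assoc (p (d + 2)) (_ / _), div_mul_eq_mul_div, odds,
    mul_div_cancel_left₀ _ hpd]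
  ring

/-- the case `k = 1` of the constant-size lazarus recurrence, for `i ≥ 3` and
`p_{i-1} > 0`. -/
theorem lazarus_recurrence_k_eq_one (N : ℕ) (p : ℕ → ℝ)
    (hp : ∀ l, 1 ≤ l → l ≤ N → 0 ≤ p l ∧ p l ≤ 1)
    (i : ℕ) (hi3 : 3 ≤ i) (hiN : i ≤ N) (hpi : 0 < p (i - 1)) :
    lazLastProb N p i 1 i
        = p i * lazLastProb N p (i - 1) 1 (i - 1)
          + p i * ((1 - p (i - 1)) / p (i - 1)) * lazLastProb N p (i - 1) 0 (i - 1)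
          - p i * lazLastProb N p (i - 1) 0 0 ∧
      lazLastProb N p i 1 i
        = p i * lazLastProb N p (i - 1) 1 (i - 1)
          + p i * lazLastProb N p (i - 1) 0 (i - 2) := by
  obtain ⟨d, rfl⟩ := Nat.exists_eq_add_of_le' hi3
  simpa using lazarus_recurrence_k_eq_one_general N p 0 (d + 1) hiN hpi.ne'
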